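/- (Theorem 2, power against local alternatives.) Let q ≥ 2, θ_0 ∈ ℝ, δ > 0, and σ, σ_1, …, σ_q > 0. Let θ̂_n be random vectors in ℝ^{q+1} such that √n (θ̂_n − θ_0·1_{q+1}) converges in distribution on ℝ^{q+1} to the normal law with mean vector Δ = (δ, 0, …, 0) and covariance matrix diag(σ², σ_1², …, σ_q²), where 1_{q+1} is the vector of ones. Then for every w ∈ (0,1), lim_{n→∞} E φ(θ̂_n, w) exists and satisfies lim_{n→∞} E φ(θ̂_n, w) ≥ 2^q · sup_{t ≥ 0} Φ( δ/σ − ((1+w)/(1−w)) t ) ∏_{k=1}^q ( Φ((σ/σ_k) t) − 1/2 ) > 0. -/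

import Mathlib

/-!
Write `S = S(x,w)`. Since `T` increases strictly with the sum of the first two entries when the
total is fixed, `T(S) = T(S^▽)` holds exactly when the first two entries of `S` dominate the others
(`Tstat_eq_rearr_iff`). For the vector `S(x,w)` this is membership of `x` in the closed polyhedral
cone `(1-w) x₁ + w x̄₀ ≥ x₀ₖ` for all `k` (`phiTest_eq`), which is invariant under
`x ↦ c (x - a·1)` with `c > 0`. Hence `E φ(θ̂ₙ, w)` is the probability that the rescaled estimator
lies in this cone. The boundary of the cone lies in finitely many hyperplanes that are null for the
limit law, so the portmanteau theorem gives convergence to the normal probability of the cone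
(`tendsto_power`).

For the lower bound, the cone contains, for every `t ≥ 0`, the box
`x₁ ≥ σ t (1+w)/(1-w)`, `|x₀ₖ| ≤ σ t`, whose normal probability is
`2^q Φ(δ/σ - t (1+w)/(1-w)) ∏ₖ (Φ(σ t/σₖ) - 1/2)` (`bound_le_region`). The supremum is positive
because the term at `t = 1` is.
-/

open MeasureTheory ProbabilityTheory Filter Set

noncomputable section

/-- Standard normal cumulative distribution function `Φ`. -/
def Phi (x : ℝ) : ℝ := ((gaussianReal 0 1) (Set.Iic x)).toReal

/-- Standard normal density `ϕ`. -/
def stdNormalPDF (y : ℝ) : ℝ := gaussianPDFReal 0 1 y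

/-- Mean of the `q` control coordinates of `x = (x₁, x₀₁, …, x₀q)`. -/
def xbar (q : ℕ) (x : Fin (q + 1) → ℝ) : ℝ := (∑ k : Fin q, x k.succ) / q

/-- The weighted, recentered vector `S(x, w)`. -/
def Svec (q : ℕ) (w : ℝ) (x : Fin (q + 1) → ℝ) : Fin (q + 2) → ℝ := fun j =>
  if j.val = 0 then (1 + w) * (x 0 - xbar q x)
  else if j.val = 1 then (1 - w) * (x 0 - xbar q x)
  else x ⟨j.val - 1, by have := j.isLt; omega⟩ - xbar q x

/-- The decreasing rearrangement `s^▽` of a tuple `s`. -/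
def rearr {n : ℕ} (s : Fin n → ℝ) : Fin n → ℝ := fun i => (s ∘ Tuple.sort s) i.rev

/-- The difference-of-means statistic `T(s)`. -/
def Tstat (q : ℕ) (s : Fin (q + 2) → ℝ) : ℝ :=
  (s 0 + s 1) / 2 - (∑ k : Fin q, s ⟨k.val + 2, by have := k.isLt; omega⟩) / q

/-- The rearrangement test `φ(x, w) = 1{T(S(x,w)) = T(S(x,w)^▽)}`. -/
def phiTest (q : ℕ) (x : Fin (q + 1) → ℝ) (w : ℝ) : ℝ :=
  if Tstat q (Svec q w x) = Tstat q (rearr (Svec q w x)) then 1 else 0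

/-- The size bound `ξ_q(w, ρ)`. -/
def xiBound (q : ℕ) (w ρ : ℝ) : ℝ :=
  (1 / 2) ^ (q + 1)
    + (∫ y in Set.Ioi (0 : ℝ), (Phi ((1 - w) * ρ * y)) ^ (q - 1) * stdNormalPDF y)
    + sInf ((fun t : ℝ => Phi (Real.sqrt ((q : ℝ) - 1) * w * t) ^ (q - 1)
        + 2 * Phi (-(q : ℝ) * t)) '' Set.Ioi 0)

/-- The lower bound on power from Proposition 1. -/
def powerBound (q : ℕ) (w δ σ : ℝ) (σs : Fin q → ℝ) : ℝ :=
  2 ^ q * sSup ((fun t : ℝ => Phi (δ / σ - ((1 + w) / (1 - w)) * t) *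
      ∏ k : Fin q, (Phi ((σ / σs k) * t) - 1 / 2)) '' Set.Ici 0)

/-! ### The acceptance region of the rearrangement test -/

/-- Among sums of two distinct entries of an antitone tuple, the one of the first two is largest. -/
lemma antitone_pair_le {q : ℕ} {u : Fin (q + 2) → ℝ} (hu : Antitone u) {i j : Fin (q + 2)}
    (hij : i ≠ j) : u i + u j ≤ u 0 + u 1 := by
  have key : ∀ a b : Fin (q + 2), a < b → u a + u b ≤ u 0 + u 1 := by
    intro a b hab
    have h1 : u a ≤ u 0 := hu (Fin.zero_le a)
    have h2 : u b ≤ u 1 := by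
      apply hu
      rw [Fin.le_def]
      rw [Fin.lt_def] at hab
      simp only [Fin.val_one]
      omega
    linarith
  rcases lt_or_gt_of_ne hij with h | h
  · exact key i j h
  · rw [add_comm]
    exact key j i h

lemma rearr_antitone {n : ℕ} (s : Fin n → ℝ) : Antitone (rearr s) := by
  intro i j hij
  exact Tuple.monotone_sort s (Fin.rev_le_rev.mpr hij)

lemma exists_perm_rearr {n : ℕ} (s : Fin n → ℝ) :
    ∃ π : Equiv.Perm (Fin n), ∀ i, rearr s i = s (π i) :=
  ⟨Fin.revPerm.trans (Tuple.sort s), fun i => by simp [rearr]⟩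

/-- `T` depends only on the total sum and on the sum of the first two entries. -/
lemma Tstat_eq (q : ℕ) (s : Fin (q + 2) → ℝ) :
    Tstat q s = (s 0 + s 1) / 2 - ((∑ i, s i) - (s 0 + s 1)) / q := by
  have h : ∑ i, s i = s 0 + (s 1 + ∑ k : Fin q, s ⟨k.val + 2, by have := k.isLt; omega⟩) := by
    rw [Fin.sum_univ_succ, Fin.sum_univ_succ]
    rfl
  unfold Tstat
  rw [h]
  ring

/-- `T` is unchanged by the decreasing rearrangement exactly when the first two entries
already dominate all the others. -/
lemma Tstat_eq_rearr_iff (q : ℕ) (s : Fin (q + 2) → ℝ) :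
    Tstat q s = Tstat q (rearr s) ↔
      ∀ k : Fin q, s k.succ.succ ≤ s 0 ∧ s k.succ.succ ≤ s 1 := by
  obtain ⟨π, hπ⟩ := exists_perm_rearr s
  have hsum : ∑ i, rearr s i = ∑ i, s i := by
    simp_rw [hπ]
    exact Equiv.sum_comp π s
  have hpair : ∀ i j : Fin (q + 2), i ≠ j → s i + s j ≤ rearr s 0 + rearr s 1 := by
    intro i j hij
    have := antitone_pair_le (rearr_antitone s) (i := π.symm i) (j := π.symm j)
      (fun h => hij (π.symm.injective h))
    simpa [hπ] using this
  have h01 : (0 : Fin (q + 2)) ≠ 1 := by simp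
  have hiff : Tstat q s = Tstat q (rearr s) ↔ s 0 + s 1 = rearr s 0 + rearr s 1 := by
    rw [Tstat_eq, Tstat_eq, hsum]
    constructor
    · intro h
      have hq : (0 : ℝ) ≤ (q : ℝ)⁻¹ := by positivity
      rw [div_eq_mul_inv _ (q : ℝ), div_eq_mul_inv _ (q : ℝ)] at h
      have h2 : (s 0 + s 1 - (rearr s 0 + rearr s 1)) * (1 / 2 + (q : ℝ)⁻¹) = 0 := by
        linear_combination h
      rcases mul_eq_zero.mp h2 with h3 | h3
      · linarith
      · linarith
    · intro h
      rw [h]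
  rw [hiff]
  constructor
  · intro h k
    have ha := hpair k.succ.succ 1 (by simp [Fin.ext_iff])
    have hb := hpair 0 k.succ.succ (by simp [Fin.ext_iff])
    constructor <;> linarith
  · intro h
    refine le_antisymm (hpair 0 1 h01) ?_
    rw [hπ, hπ]
    have hne : π 0 ≠ π 1 := fun hh => h01 (π.injective hh)
    generalize π 0 = a at hne ⊢
    generalize π 1 = b at hne ⊢
    induction a using Fin.cases with
    | zero =>
      induction b using Fin.cases with
      | zero => exact absurd rfl hne
      | succ b =>
        induction b using Fin.cases with
        | zero => exact le_rfl
        | succ b => linarith [(h b).2]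
    | succ a =>
      induction a using Fin.cases with
      | zero =>
        induction b using Fin.cases with
        | zero => exact (add_comm _ _).le
        | succ b =>
          induction b using Fin.cases with
          | zero => exact absurd rfl hne
          | succ b =>
            have h1 := (h b).1
            change s 1 + _ ≤ _
            linarith
      | succ a =>
        induction b using Fin.cases with
        | zero => linarith [(h a).2]
        | succ b =>
          induction b using Fin.cases with
          | zero =>
            have h1 := (h a).1
            change _ + s 1 ≤ _
            linarith
          | succ b => linarith [(h a).1, (h b).2]

/-- The margin by which the smaller treated entry `(1-w)(x₁ - x̄₀)` of `S(x,w)` exceeds the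
control entry `x₀ₖ - x̄₀`. -/
def gap (q : ℕ) (w : ℝ) (k : Fin q) (x : Fin (q + 1) → ℝ) : ℝ :=
  (1 - w) * x 0 + w * xbar q x - x k.succ

/-- The polyhedral cone on which the test statistic is unchanged by the rearrangement. -/
def region (q : ℕ) (w : ℝ) : Set (Fin (q + 1) → ℝ) := {x | ∀ k, 0 ≤ gap q w k x}

/-- The recentred controls sum to zero, so `x ∈ region q w` already forces `x₁ ≥ x̄₀`;
therefore domination by the entry `(1+w)(x₁ - x̄₀)` needs no separate condition. -/
lemma phiTest_eq {q : ℕ} (hq : 0 < q) {w : ℝ} (hw : w ∈ Set.Ioo (0 : ℝ) 1)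
    (x : Fin (q + 1) → ℝ) :
    phiTest q x w = (region q w).indicator (fun _ => (1 : ℝ)) x := by
  classical
  obtain ⟨hw0, hw1⟩ := hw
  have hq' : (0 : ℝ) < q := by exact_mod_cast hq
  have hS0 : Svec q w x 0 = (1 + w) * (x 0 - xbar q x) := by simp [Svec]
  have hS1 : Svec q w x 1 = (1 - w) * (x 0 - xbar q x) := by simp [Svec]
  have hSk : ∀ k : Fin q, Svec q w x k.succ.succ = x k.succ - xbar q x := by
    intro k
    simp [Svec]
    rfl
  have hiff : Tstat q (Svec q w x) = Tstat q (rearr (Svec q w x)) ↔ x ∈ region q w := by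
    rw [Tstat_eq_rearr_iff]
    simp only [hS0, hS1, hSk, region, gap, Set.mem_ofPred_eq]
    constructor
    · intro h k
      linarith [(h k).2]
    · intro h
      have hsum : ∑ k : Fin q, x k.succ = q * xbar q x := by
        unfold xbar
        field_simp
      have hpos : 0 ≤ x 0 - xbar q x := by
        have h1 : 0 ≤ ∑ k : Fin q, ((1 - w) * x 0 + w * xbar q x - x k.succ) :=
          Finset.sum_nonneg fun k _ => h k
        rw [Finset.sum_sub_distrib, hsum, Finset.sum_const, Finset.card_univ, Fintype.card_fin,
          nsmul_eq_mul] at h1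
        have h2 : 0 ≤ (q * (1 - w)) * (x 0 - xbar q x) := by linarith
        exact nonneg_of_mul_nonneg_right h2 (mul_pos hq' (by linarith))
      intro k
      have := h k
      constructor
      · nlinarith
      · linarith
  unfold phiTest
  by_cases hx : x ∈ region q w
  · rw [if_pos (hiff.mpr hx), Set.indicator_of_mem hx]
  · rw [if_neg (fun h => hx (hiff.mp h)), Set.indicator_of_notMem hx]

/-- The region is invariant under translations along `(1, …, 1)` and positive dilations. -/
lemma mem_region_affine {q : ℕ} (hq : 0 < q) (w : ℝ) {c : ℝ} (hc : 0 < c) (a : ℝ)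
    (x : Fin (q + 1) → ℝ) :
    (fun i => c * (x i - a)) ∈ region q w ↔ x ∈ region q w := by
  have hq' : (q : ℝ) ≠ 0 := by exact_mod_cast hq.ne'
  have hg : ∀ k, gap q w k (fun i => c * (x i - a)) = c * gap q w k x := by
    intro k
    have hb : xbar q (fun i => c * (x i - a)) = c * (xbar q x - a) := by
      unfold xbar
      rw [← Finset.mul_sum, Finset.sum_sub_distrib, Finset.sum_const, Finset.card_univ,
        Fintype.card_fin, nsmul_eq_mul]
      field_simp
    unfold gap
    rw [hb]
    ring
  simp only [region, Set.mem_ofPred_eq, hg, mul_nonneg_iff_of_pos_left hc]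

lemma continuous_gap (q : ℕ) (w : ℝ) (k : Fin q) : Continuous (gap q w k) := by
  unfold gap xbar
  fun_prop

lemma isClosed_region (q : ℕ) (w : ℝ) : IsClosed (region q w) := by
  have : region q w = ⋂ k, {x | 0 ≤ gap q w k x} := by
    ext x
    simp [region]
  rw [this]
  exact isClosed_iInter fun k => isClosed_le continuous_const (continuous_gap q w k)

lemma frontier_region_subset (q : ℕ) (w : ℝ) :
    frontier (region q w) ⊆ ⋃ k, {x | gap q w k x = 0} := by
  intro x hx
  rw [(isClosed_region q w).frontier_eq] at hx
  obtain ⟨hx1, hx2⟩ := hx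
  by_contra hne
  simp only [Set.mem_iUnion, Set.mem_ofPred_eq, not_exists] at hne
  apply hx2
  have hopen : IsOpen (⋂ k, {y | 0 < gap q w k y}) :=
    isOpen_iInter_of_finite fun k => isOpen_lt continuous_const (continuous_gap q w k)
  refine interior_maximal ?_ hopen ?_
  · intro y hy k
    exact (Set.mem_iInter.mp hy k).le
  · exact Set.mem_iInter.mpr fun k => lt_of_le_of_ne (hx1 k) (Ne.symm (hne k))

/-- Each bounding hyperplane of the region is a graph over the control coordinates, hence null for
a product measure whose first factor has no atoms. -/
lemma measure_gap_eq_zero {q : ℕ} {w : ℝ} (hw : w < 1) (k : Fin q)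
    (ν : Fin (q + 1) → Measure ℝ) [∀ i, IsProbabilityMeasure (ν i)]
    (h0 : ∀ a, ν 0 {a} = 0) : Measure.pi ν {x | gap q w k x = 0} = 0 := by
  have hms : MeasurableSet {x | gap q w k x = 0} :=
    (continuous_gap q w k).measurable (measurableSet_singleton 0)
  have hmp := (measurePreserving_piFinSuccAbove ν 0).symm
  rw [← hmp.measure_preimage hms.nullMeasurableSet,
    Measure.prod_apply_symm (hmp.measurable hms)]
  refine (lintegral_congr fun y => ?_).trans lintegral_zero
  refine measure_mono_null ?_ (h0 ((y k - w * ((∑ j, y j) / q)) / (1 - w)))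
  intro a ha
  have ha' : (1 - w) * a + w * ((∑ j, y j) / q) - y k = 0 := by
    simpa [gap, xbar, MeasurableEquiv.piFinSuccAbove] using ha
  rw [Set.mem_singleton_iff, eq_div_iff (by linarith)]
  linarith

/-! ### Normal probabilities -/

instance : NullSingletonClass (gaussianReal 0 1) := nullSingletonClass_gaussianReal one_ne_zero

lemma gaussianReal_eq_map_sub (m : ℝ) {s : ℝ} :
    gaussianReal m (s ^ 2).toNNReal = (gaussianReal 0 1).map (fun x => m - s * x) := by
  have h1 : (fun x : ℝ => m - s * x) = (fun x => m - x) ∘ (fun x => s * x) := rfl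
  rw [h1, ← Measure.map_map (by fun_prop) (by fun_prop), gaussianReal_map_const_mul,
    gaussianReal_map_const_sub]
  congr 1
  · simp
  · ext
    simp [sq_nonneg]

lemma gaussianReal_Ici (m a : ℝ) {s : ℝ} (hs : 0 < s) :
    ((gaussianReal m (s ^ 2).toNNReal) (Set.Ici a)).toReal = Phi ((m - a) / s) := by
  rw [gaussianReal_eq_map_sub, Measure.map_apply (by fun_prop) measurableSet_Ici, Phi]
  congr 2
  ext x
  simp only [Set.mem_preimage, Set.mem_Ici, Set.mem_Iic, le_div_iff₀ hs]
  constructor <;> intro h <;> linarith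

lemma Phi_neg (x : ℝ) : Phi (-x) = 1 - Phi x := by
  have h := gaussianReal_Ici 0 x one_pos
  simp only [one_pow, Real.toNNReal_one, zero_sub, div_one] at h
  rw [← h, ← measure_congr (Ioi_ae_eq_Ici (a := x)), ← Set.compl_Iic]
  rw [prob_compl_eq_one_sub (measurableSet_Iic (a := x)),
    ENNReal.toReal_sub_of_le prob_le_one ENNReal.one_ne_top]
  rfl

lemma Phi_sub {a b : ℝ} (hab : a ≤ b) :
    Phi b - Phi a = ((gaussianReal 0 1) (Set.Ioc a b)).toReal := by
  have hdiff : Set.Ioc a b = Set.Iic b \ Set.Iic a := by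
    ext x
    simp [and_comm]
  rw [hdiff, measure_sdiff (Set.Iic_subset_Iic.mpr hab)
    measurableSet_Iic.nullMeasurableSet (measure_ne_top _ _),
    ENNReal.toReal_sub_of_le (measure_mono (Set.Iic_subset_Iic.mpr hab)) (measure_ne_top _ _)]
  rfl

lemma Phi_strictMono : StrictMono Phi := by
  intro a b hab
  rw [← sub_pos, Phi_sub hab.le]
  refine ENNReal.toReal_pos (fun h => ?_) (measure_ne_top _ _)
  have := gaussianReal_absolutelyContinuous' 0 one_ne_zero h
  simp at this
  linarith

lemma Phi_pos (x : ℝ) : 0 < Phi x :=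
  lt_of_le_of_lt ENNReal.toReal_nonneg (Phi_strictMono (sub_one_lt x))

lemma Phi_zero : Phi 0 = 1 / 2 := by
  have := Phi_neg 0
  rw [neg_zero] at this
  linarith

lemma gaussianReal_Icc {a s : ℝ} (ha : 0 ≤ a) (hs : 0 < s) :
    ((gaussianReal 0 (s ^ 2).toNNReal) (Set.Icc (-a) a)).toReal = 2 * (Phi (a / s) - 1 / 2) := by
  have h0 : 0 ≤ a / s := by positivity
  have h1 : 2 * (Phi (a / s) - 1 / 2) = Phi (a / s) - Phi (-(a / s)) := by
    rw [Phi_neg]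
    ring
  rw [h1, Phi_sub (by linarith), measure_congr Ioc_ae_eq_Icc, gaussianReal_eq_map_sub,
    Measure.map_apply (by fun_prop) measurableSet_Icc]
  congr 2
  ext x
  simp only [Set.mem_preimage, Set.mem_Icc, le_div_iff₀ hs, ← neg_div, div_le_iff₀ hs]
  constructor <;> rintro ⟨h, h'⟩ <;> constructor <;> linarith

/-! ### The limiting power and its lower bound -/

/-- The `i`-th factor of the limit law, a product of normals with means `(δ, 0, …, 0)` and
standard deviations `(σ, σ₁, …, σ_q)`. -/
abbrev limitFactor {q : ℕ} (δ σ : ℝ) (σs : Fin q → ℝ) (i : Fin (q + 1)) : Measure ℝ :=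
  gaussianReal ((Fin.cons δ (fun _ => 0) : Fin (q + 1) → ℝ) i)
    ((Fin.cons (σ ^ 2) (fun k => (σs k) ^ 2) : Fin (q + 1) → ℝ) i).toNNReal

/-- On the box `x₁ ≥ r(1+w)/(1-w)`, `|x₀ₖ| ≤ r` one has
`(1-w)x₁ + w x̄₀ - x₀ₖ ≥ (1+w)r - wr - r = 0`. -/
lemma box_subset_region {q : ℕ} (hq : 0 < q) {w : ℝ} (hw : w ∈ Set.Ioo (0 : ℝ) 1) (r : ℝ) :
    (Set.univ.pi (Fin.cons (Set.Ici ((1 + w) / (1 - w) * r)) (fun _ => Set.Icc (-r) r) :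
      Fin (q + 1) → Set ℝ)) ⊆ region q w := by
  obtain ⟨hw0, hw1⟩ := hw
  have hq' : (0 : ℝ) < q := by exact_mod_cast hq
  intro x hx k
  rw [Set.mem_univ_pi] at hx
  have h0 : (1 + w) / (1 - w) * r ≤ x 0 := hx 0
  have hk : ∀ j : Fin q, -r ≤ x j.succ ∧ x j.succ ≤ r := fun j => hx j.succ
  have hb : -r ≤ xbar q x := by
    unfold xbar
    rw [le_div_iff₀ hq']
    calc -r * q = ∑ _j : Fin q, (-r) := by simp; ring
      _ ≤ _ := Finset.sum_le_sum fun j _ => (hk j).1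
  have h1 : (1 + w) * r ≤ (1 - w) * x 0 := by
    have := mul_le_mul_of_nonneg_left h0 (show 0 ≤ 1 - w by linarith)
    have h2 : (1 - w) * ((1 + w) / (1 - w) * r) = (1 + w) * r := by
      have : 1 - w ≠ 0 := by linarith
      field_simp
    linarith
  unfold gap
  nlinarith [(hk k).2]

lemma bound_le_region {q : ℕ} (hq : 0 < q) {w : ℝ} (hw : w ∈ Set.Ioo (0 : ℝ) 1) (δ : ℝ)
    {σ : ℝ} (hσ : 0 < σ) {σs : Fin q → ℝ} (hσs : ∀ k, 0 < σs k) {t : ℝ} (ht : 0 ≤ t) :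
    2 ^ q * (Phi (δ / σ - ((1 + w) / (1 - w)) * t) *
      ∏ k : Fin q, (Phi ((σ / σs k) * t) - 1 / 2))
      ≤ (Measure.pi (limitFactor δ σ σs) (region q w)).toReal := by
  have hσt : 0 ≤ σ * t := by positivity
  refine le_trans (le_of_eq ?_) (ENNReal.toReal_mono (measure_ne_top _ _)
    (measure_mono (box_subset_region hq hw (σ * t))))
  rw [Measure.pi_pi, ENNReal.toReal_prod, Fin.prod_univ_succ]
  simp only [limitFactor, Fin.cons_zero, Fin.cons_succ]
  rw [gaussianReal_Ici _ _ hσ]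
  simp_rw [fun k => gaussianReal_Icc hσt (hσs k)]
  rw [Finset.prod_mul_distrib, Finset.prod_const, Finset.card_univ, Fintype.card_fin]
  have e1 : (δ - (1 + w) / (1 - w) * (σ * t)) / σ = δ / σ - ((1 + w) / (1 - w)) * t := by
    field_simp
  have e2 : ∀ k, σ * t / σs k = (σ / σs k) * t := fun k => by ring
  simp_rw [e1, e2]
  ring

lemma tendsto_power {Ω : Type*} [MeasurableSpace Ω] (P : Measure Ω) [IsProbabilityMeasure P]
    {q : ℕ} (hq : 0 < q) (θ0 : ℝ) (ν : Fin (q + 1) → Measure ℝ)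
    [∀ i, IsProbabilityMeasure (ν i)] (h0 : ∀ a, ν 0 {a} = 0)
    (θhat : ℕ → Ω → Fin (q + 1) → ℝ) (hmeas : ∀ n, Measurable (θhat n))
    (hconv : ∀ f : BoundedContinuousFunction (Fin (q + 1) → ℝ) ℝ,
      Tendsto (fun n : ℕ => ∫ ω, f (fun i => Real.sqrt n * (θhat n ω i - θ0)) ∂P) atTop
        (nhds (∫ x, f x ∂(Measure.pi ν))))
    {w : ℝ} (hw : w ∈ Set.Ioo (0 : ℝ) 1) :
    Tendsto (fun n : ℕ => ∫ ω, phiTest q (θhat n ω) w ∂P) atTop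
      (nhds (Measure.pi ν (region q w)).toReal) := by
  have hm : ∀ n : ℕ, Measurable (fun ω => fun i => Real.sqrt n * (θhat n ω i - θ0)) := by
    intro n
    have := hmeas n
    fun_prop
  have hprob : ∀ n : ℕ, IsProbabilityMeasure
      (P.map (fun ω => fun i => Real.sqrt n * (θhat n ω i - θ0))) :=
    fun n => Measure.isProbabilityMeasure_map (hm n).aemeasurable
  let μs : ℕ → ProbabilityMeasure (Fin (q + 1) → ℝ) := fun n => ⟨_, hprob n⟩
  let μ : ProbabilityMeasure (Fin (q + 1) → ℝ) := ⟨Measure.pi ν, inferInstance⟩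
  have hlim : Tendsto μs atTop (nhds μ) := by
    rw [ProbabilityMeasure.tendsto_iff_forall_integral_tendsto]
    intro f
    refine (hconv f).congr fun n => ?_
    exact (integral_map (hm n).aemeasurable f.continuous.aestronglyMeasurable).symm
  have hfr : (μ : Measure (Fin (q + 1) → ℝ)) (frontier (region q w)) = 0 :=
    measure_mono_null (frontier_region_subset q w)
      (measure_iUnion_null fun k => measure_gap_eq_zero hw.2 k ν h0)
  have hT := (ENNReal.tendsto_toReal (measure_ne_top _ _)).comp
    (ProbabilityMeasure.tendsto_measure_of_null_frontier_of_tendsto' hlim hfr)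
  refine hT.congr' ?_
  -- At `n = 0` the scaling `√n` degenerates, so the identity only holds from `n = 1` on.
  filter_upwards [eventually_gt_atTop 0] with n hn
  have hc : 0 < Real.sqrt n := Real.sqrt_pos.mpr (by exact_mod_cast hn)
  have hreg := (isClosed_region q w).measurableSet
  change ((P.map _) (region q w)).toReal = _
  rw [Measure.map_apply (hm n) hreg]
  have hpre : (fun ω => fun i => Real.sqrt n * (θhat n ω i - θ0)) ⁻¹' region q w
      = θhat n ⁻¹' region q w := by
    ext ω
    exact mem_region_affine hq w hc θ0 (θhat n ω)
  have hphi : (fun ω => phiTest q (θhat n ω) w)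
      = (θhat n ⁻¹' region q w).indicator (fun _ => (1 : ℝ)) := by
    funext ω
    rw [phiTest_eq hq hw]
    rfl
  rw [hpre, hphi, integral_indicator_const _ (hmeas n hreg)]
  simp [Measure.real]

/-- Theorem 2, power against local alternatives. -/
theorem statement17 {Ω : Type*} [MeasurableSpace Ω] (P : Measure Ω) [IsProbabilityMeasure P]
    (q : ℕ) (hq : 2 ≤ q) (θ0 δ : ℝ) (hδ : 0 < δ)
    (σ : ℝ) (hσ : 0 < σ) (σs : Fin q → ℝ) (hσs : ∀ k, 0 < σs k)
    (θhat : ℕ → Ω → Fin (q + 1) → ℝ) (hmeas : ∀ n, Measurable (θhat n))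
    (hconv : ∀ f : BoundedContinuousFunction (Fin (q + 1) → ℝ) ℝ,
      Tendsto (fun n : ℕ => ∫ ω, f (fun i => Real.sqrt n * (θhat n ω i - θ0)) ∂P) atTop
        (nhds (∫ x, f x ∂(Measure.pi (fun i : Fin (q + 1) =>
          gaussianReal ((Fin.cons δ (fun _ => 0) : Fin (q + 1) → ℝ) i)
            ((Fin.cons (σ ^ 2) (fun k => (σs k) ^ 2) : Fin (q + 1) → ℝ) i).toNNReal)))))
    (w : ℝ) (hw : w ∈ Set.Ioo (0 : ℝ) 1) :
    ∃ L : ℝ, Tendsto (fun n : ℕ => ∫ ω, phiTest q (θhat n ω) w ∂P) atTop (nhds L) ∧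
      powerBound q w δ σ σs ≤ L ∧ 0 < powerBound q w δ σ σs := by
  have hq0 : 0 < q := by omega
  have h0 : ∀ a, limitFactor δ σ σs 0 {a} = 0 := by
    intro a
    have : NullSingletonClass (limitFactor δ σ σs 0) := by
      refine nullSingletonClass_gaussianReal ?_
      rw [Fin.cons_zero]
      exact (Real.toNNReal_pos.mpr (by positivity)).ne'
    exact measure_singleton a
  have hle : ∀ t : ℝ, 0 ≤ t → _ := fun t ht => bound_le_region hq0 hw δ hσ hσs ht
  have h2 : (0 : ℝ) < 2 ^ q := by positivity
  have hle' : ∀ y ∈ (fun t : ℝ => Phi (δ / σ - ((1 + w) / (1 - w)) * t) *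
      ∏ k : Fin q, (Phi ((σ / σs k) * t) - 1 / 2)) '' Set.Ici 0,
      y ≤ (Measure.pi (limitFactor δ σ σs) (region q w)).toReal / 2 ^ q := by
    rintro y ⟨t, ht, rfl⟩
    rw [le_div_iff₀ h2, mul_comm]
    exact hle t ht
  refine ⟨_, tendsto_power P hq0 θ0 (limitFactor δ σ σs) h0 θhat hmeas hconv hw, ?_, ?_⟩
  · unfold powerBound
    rw [mul_comm, ← le_div_iff₀ h2]
    exact csSup_le (Set.nonempty_Ici.image _) hle'
  · unfold powerBound
    refine mul_pos h2 (lt_of_lt_of_le ?_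
      (le_csSup ⟨_, hle'⟩ (Set.mem_image_of_mem _ (Set.mem_Ici.mpr (zero_le_one' ℝ)))))
    refine mul_pos (Phi_pos _) (Finset.prod_pos fun k _ => ?_)
    have hpos : 0 < σ / σs k * 1 := by
      have := hσs k
      positivity
    have := Phi_strictMono hpos
    rw [Phi_zero] at this
    linarith
end
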